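/- arXiv:1008.1489 — 3 statements merged into one kernel-verified Lean document; each statement's English description precedes it below -/
import Mathlib

section
/- Let A be an abelian category and let x be an object of the bounded derived category D^b(A) (i.e. an object of the derived category of A whose cohomology objects H^i(x) vanish for all but finitely many i). Let u : x → x⟦2⟧ be a morphism and n an integer. For i ≥ 0 denote by u^i : H^{n-i}(x) → H^{n+i}(x) the map induced on cohomology by the i-fold composite of u (taking the appropriate shifts of u). If u^i : H^{n-i}(x) → H^{n+i}(x) is an isomorphism for every i ≥ 0, then x is isomorphic in D^b(A) to the finite direct sum ⊕_i H^i(x)⟦-i⟧, where each cohomology object H^i(x) is regarded as a complex concentrated in degree 0. -/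
/-!
Deligne's decomposition criterion (Theorem 3.2 of the paper):
if `u : x ⟶ x⟦2⟧` induces isomorphisms `u^i : H^{n-i}(x) ≅ H^{n+i}(x)` for all `i ≥ 0`,
then `x` decomposes as the direct sum of its (shifted) cohomology objects.
-/

open CategoryTheory CategoryTheory.Limits DerivedCategory

universe w v u

variable {A : Type u} [Category.{v} A] [Abelian A] [HasDerivedCategory.{w} A]

/-- The map `H^m(x) ⟶ H^{m + 2i}(x)` induced on cohomology by the `i`-fold composite of
`u : x ⟶ x⟦2⟧` (taking the appropriate shifts of `u`). -/
noncomputable def homologyPow {x : DerivedCategory A} (u : x ⟶ x⟦(2 : ℤ)⟧) :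
    (i : ℕ) → (m : ℤ) →
      ((homologyFunctor A m).obj x ⟶ (homologyFunctor A (m + 2 * i)).obj x)
  | 0, m => eqToHom (congrArg (fun t => (homologyFunctor A t).obj x)
      (show m = m + 2 * ((0 : ℕ) : ℤ) by push_cast; ring))
  | (i + 1), m =>
      (homologyFunctor A 0).shiftMap u m (m + 2) (by ring) ≫ homologyPow u i (m + 2) ≫
        eqToHom (congrArg (fun t => (homologyFunctor A t).obj x)
          (show m + 2 + 2 * (i : ℤ) = m + 2 * ((i + 1 : ℕ) : ℤ) by push_cast; ring))

/-!
Let `[a, b]` be the range of degrees in which `x` has cohomology, enlarged to be symmetric about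
the centre `n`, and let `v : x ⟶ x⟦b - a⟧` be the power of `u` that is an isomorphism on `H^a`.
The truncation `τ≤a x ⟶ x` lifts the bottom cohomology to `x`, and composing it with `v` lifts the
top cohomology; dually, `x ⟶ τ≥b x` colifts the top cohomology, and precomposing its shift with `v`
colifts the bottom one. A lift followed by a colift in the same degree is invertible, so the
cohomology in degrees `a` and `b` splits off. The other powers of `u`, compressed to the
complementary summand, still induce isomorphisms on its cohomology, so one can induct on `b - a`.
-/

open Pretriangulated ZeroObject

section FunctorBiproducts

variable {C D : Type*} [Category* C] [Category* D]

lemma isIso_map_retract_r (F : C ⥤ D) {X Y : C} (h : Retract X Y) [IsIso (F.map h.i)] :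
    IsIso (F.map h.r) := by
  have : IsIso (F.map h.i ≫ F.map h.r) := by
    rw [← F.map_comp, h.retract]
    infer_instance
  exact IsIso.of_isIso_comp_left (F.map h.i) _

lemma isZero_obj_of_isIso_map_inl [HasZeroMorphisms C] [HasZeroMorphisms D] (F : C ⥤ D)
    [F.PreservesZeroMorphisms] {X Y : C} [HasBinaryBiproduct X Y]
    [IsIso (F.map (biprod.inl : X ⟶ X ⊞ Y))] : IsZero (F.obj Y) := by
  have hsnd : F.map (biprod.snd : X ⊞ Y ⟶ Y) = 0 := by
    rw [← cancel_epi (F.map biprod.inl), ← F.map_comp, biprod.inl_snd, F.map_zero, comp_zero]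
  rw [IsZero.iff_id_eq_zero, ← F.map_id, ← biprod.inr_snd (X := X), F.map_comp, hsnd, comp_zero]

variable [Preadditive C] [Preadditive D] (F : C ⥤ D) [F.Additive]

lemma isIso_map_inr_of_isZero_obj {X Y : C} [HasBinaryBiproduct X Y] (hX : IsZero (F.obj X)) :
    IsIso (F.map (biprod.inr : Y ⟶ X ⊞ Y)) := by
  refine ⟨F.map biprod.snd, by simp [← F.map_comp], ?_⟩
  have hfst : F.map (biprod.fst : X ⊞ Y ⟶ X) = 0 := hX.eq_of_tgt _ _
  rw [← F.map_id, ← biprod.total, F.map_add, F.map_comp biprod.fst, hfst, zero_comp, zero_add,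
    F.map_comp]

variable {J : Type} [Finite J] (S : J → C) [HasBiproduct S]

lemma isIso_map_biproduct_ι {j : J} (hS : ∀ k, k ≠ j → IsZero (F.obj (S k))) :
    IsIso (F.map (biproduct.ι S j)) := by
  cases nonempty_fintype J
  refine ⟨F.map (biproduct.π S j), by simp [← F.map_comp], ?_⟩
  rw [← F.map_id, ← biproduct.total, F.map_sum, Finset.sum_eq_single j, F.map_comp]
  · intro k _ hk
    rw [F.map_comp, (hS k hk).eq_of_tgt (F.map (biproduct.π S k)) 0, zero_comp]
  · simp

lemma isZero_obj_biproduct (hS : ∀ k, IsZero (F.obj (S k))) : IsZero (F.obj (⨁ S)) := by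
  cases nonempty_fintype J
  rw [IsZero.iff_id_eq_zero, ← F.map_id, ← biproduct.total, F.map_sum]
  refine Finset.sum_eq_zero fun k _ => ?_
  rw [F.map_comp, (hS k).eq_of_tgt (F.map (biproduct.π S k)) 0, zero_comp]

end FunctorBiproducts

lemma exists_iso_biprod_of_mono {C : Type*} [Category* C] [Preadditive C] [HasZeroObject C]
    [HasShift C ℤ] [∀ n : ℤ, (shiftFunctor C n).Additive] [Pretriangulated C] {X Y : C}
    (f : X ⟶ Y) [Mono f] : ∃ (Z : C) (e : Y ≅ X ⊞ Z), f ≫ e.hom = biprod.inl := by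
  obtain ⟨Z, g, h, hT⟩ := distinguished_cocone_triangle f
  have hh : h = 0 := Triangle.mor₃_eq_zero_of_mono₁ _ hT ‹_›
  obtain ⟨e, he, -⟩ := exists_iso_binaryBiproduct_of_distTriang _ hT hh
  exact ⟨Z, e, he⟩

section ShiftSequence

variable {C D M : Type*} [Category* C] [Category* D] [AddMonoid M] [HasShift C M]
  (F : C ⥤ D) [F.ShiftSequence M]

lemma isIso_shift_map_shift_iff {X Y : C} (f : X ⟶ Y) (m a a' : M) (h : m + a = a') :
    IsIso ((F.shift a).map (f⟦m⟧')) ↔ IsIso ((F.shift a').map f) :=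
  NatIso.isIso_map_iff (F.shiftIso m a a' h) f

lemma isIso_shiftMap_iff {X Y : C} {m : M} (f : X ⟶ Y⟦m⟧) (a a' : M) (h : m + a = a') :
    IsIso (F.shiftMap f a a' h) ↔ IsIso ((F.shift a).map f) :=
  isIso_comp_right_iff _ ((F.shiftIso m a a' h).hom.app Y)

lemma shiftMap_comp_eqToHom {X Y : C} {m : M} (f : X ⟶ Y⟦m⟧) {a a' a'' : M} (h : m + a = a')
    (h' : a' = a'') :
    F.shiftMap f a a' h ≫ eqToHom (congrArg (fun t => (F.shift t).obj Y) h') =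
      F.shiftMap f a a'' (h.trans h') := by
  subst h'
  simp

lemma shiftMap_mk₀_id (X : C) {m : M} (hm : m = 0) (a a' : M) (h : m + a = a') :
    F.shiftMap (ShiftedHom.mk₀ m hm (𝟙 X)) a a' h =
      eqToHom (congrArg (fun t => (F.shift t).obj X) (by rw [← h, hm, zero_add])) := by
  subst hm
  obtain rfl : a = a' := by rw [← h, zero_add]
  simp [Functor.shiftMap, ShiftedHom.mk₀, shiftFunctorZero', ← Functor.map_comp]

lemma shiftMap_shiftedHom_comp {X Y Z : C} {m n mn : M} (f : ShiftedHom X Y m)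
    (g : ShiftedHom Y Z n) (hmn : n + m = mn) (a a' a'' : M) (h : m + a = a')
    (h' : n + a' = a'') :
    F.shiftMap (f.comp g hmn) a a'' (by rw [← hmn, add_assoc, h, h']) =
      F.shiftMap f a a' h ≫ F.shiftMap g a' a'' h' := by
  have hg : (F.shift a).map (g⟦m⟧' ≫ (shiftFunctorAdd' C n m mn hmn).inv.app Z) ≫
      (F.shiftIso mn a a'' (by rw [← hmn, add_assoc, h, h'])).hom.app Z =
        (F.shiftIso m a a' h).hom.app Y ≫ F.shiftMap g a' a'' h' := by
    rw [F.shiftIso_hom_app_comp_shiftMap g m mn hmn a a' a'' h h', Functor.map_comp,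
      Category.assoc]
  simpa [ShiftedHom.comp, Functor.shiftMap] using _ ≫= hg

end ShiftSequence

/-- The `i`-fold composite `X ⟶ X⟦i • d⟧` of `u : X ⟶ X⟦d⟧` with its own shifts. -/
noncomputable def shiftedPow {C M : Type*} [Category* C] [AddMonoid M] [HasShift C M] {X : C}
    {d : M} (u : X ⟶ X⟦d⟧) : (i : ℕ) → (X ⟶ X⟦i • d⟧)
  | 0 => ShiftedHom.mk₀ _ (zero_nsmul d) (𝟙 X)
  | i + 1 => ShiftedHom.comp u (shiftedPow u i) (succ_nsmul d i).symm

lemma shiftMap_shiftedPow_eq_homologyPow {x : DerivedCategory A} (u : x ⟶ x⟦(2 : ℤ)⟧) (i : ℕ)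
    (m : ℤ) :
    (homologyFunctor A 0).shiftMap (shiftedPow u i) m (m + 2 * i) (by rw [nsmul_eq_mul]; ring) =
      homologyPow u i m := by
  induction i generalizing m with
  | zero => exact shiftMap_mk₀_id _ _ _ _ _ _
  | succ i ih =>
    rw [homologyPow, ← ih]
    refine (shiftMap_shiftedHom_comp _ u (shiftedPow u i) _ m (m + 2) _ (by ring)
      (by rw [nsmul_eq_mul]; push_cast; ring)).trans ?_
    congr 1
    exact (shiftMap_comp_eqToHom _ (shiftedPow u i) _ (by push_cast; ring)).symm

lemma isIso_homologyMap_shiftedPow {x : DerivedCategory A} (u : x ⟶ x⟦(2 : ℤ)⟧) (i : ℕ) (m : ℤ)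
    [IsIso (homologyPow u i m)] : IsIso ((homologyFunctor A m).map (shiftedPow u i)) := by
  refine (isIso_shiftMap_iff (homologyFunctor A 0) (shiftedPow u i) m (m + 2 * i)
    (by rw [nsmul_eq_mul]; ring)).mp ?_
  rwa [shiftMap_shiftedPow_eq_homologyPow]

section Truncation

variable (x : DerivedCategory A)

lemma isIso_homologyMap_truncLEι {i m : ℤ} (h : i ≤ m) :
    IsIso ((homologyFunctor A i).map ((TStructure.t.truncLEι m).app x)) := by
  let T := (TStructure.t.triangleLEGT m).obj x
  have hT : T ∈ distTriang _ := TStructure.t.triangleLEGT_distinguished m x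
  have hT₃ : T.obj₃.IsGE (m + 1) :=
    inferInstanceAs (TStructure.t.IsGE ((TStructure.t.truncGT m).obj x) (m + 1))
  have hmono : Mono ((homologyFunctor A i).map T.mor₁) := by
    rw [HomologySequence.mono_homologyMap_mor₁_iff T hT (i - 1) i (by omega)]
    exact (isZero_of_isGE T.obj₃ (m + 1) (i - 1) (by omega)).eq_of_src _ _
  have hepi : Epi ((homologyFunctor A i).map T.mor₁) := by
    rw [HomologySequence.epi_homologyMap_mor₁_iff T hT i]
    exact (isZero_of_isGE T.obj₃ (m + 1) i (by omega)).eq_of_tgt _ _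
  exact isIso_of_mono_of_epi ((homologyFunctor A i).map T.mor₁)

lemma isIso_homologyMap_truncGEπ {i m : ℤ} (h : m ≤ i) :
    IsIso ((homologyFunctor A i).map ((TStructure.t.truncGEπ m).app x)) := by
  let T := (TStructure.t.triangleLTGE m).obj x
  have hT : T ∈ distTriang _ := TStructure.t.triangleLTGE_distinguished m x
  have hT₁ : T.obj₁.IsLE (m - 1) :=
    inferInstanceAs (TStructure.t.IsLE ((TStructure.t.truncLT m).obj x) (m - 1))
  have hmono : Mono ((homologyFunctor A i).map T.mor₂) := by
    rw [HomologySequence.mono_homologyMap_mor₂_iff T hT i]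
    exact (isZero_of_isLE T.obj₁ (m - 1) i (by omega)).eq_of_src _ _
  have hepi : Epi ((homologyFunctor A i).map T.mor₂) := by
    rw [HomologySequence.epi_homologyMap_mor₂_iff T hT i (i + 1) rfl]
    exact (isZero_of_isLE T.obj₁ (m - 1) (i + 1) (by omega)).eq_of_tgt _ _
  exact isIso_of_mono_of_epi ((homologyFunctor A i).map T.mor₂)

end Truncation

lemma isIso_of_isIso_homologyMap {s t : DerivedCategory A} (f : s ⟶ t) (k : ℤ) [s.IsGE k]
    [s.IsLE k] [t.IsGE k] [t.IsLE k] [IsIso ((homologyFunctor A k).map f)] : IsIso f := by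
  rw [isIso_iff]
  intro j
  rcases lt_trichotomy j k with hj | rfl | hj
  · exact (isZero_of_isGE s k j hj).isIso (isZero_of_isGE t k j hj) _
  · infer_instance
  · exact (isZero_of_isLE s k j hj).isIso (isZero_of_isLE t k j hj) _

/-- The cohomology of `x` in degree `k` lifts to `x`: some object with cohomology only in degree
`k` maps to `x` by a morphism that is an isomorphism on `H^k`. -/
def HomologyLifts (x : DerivedCategory A) (k : ℤ) : Prop :=
  ∃ (s : DerivedCategory A) (f : s ⟶ x), s.IsGE k ∧ s.IsLE k ∧ IsIso ((homologyFunctor A k).map f)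

/-- The notion dual to `HomologyLifts`: `x` maps to some object with cohomology only in degree `k`
by a morphism that is an isomorphism on `H^k`. -/
def HomologyColifts (x : DerivedCategory A) (k : ℤ) : Prop :=
  ∃ (t : DerivedCategory A) (g : x ⟶ t), t.IsGE k ∧ t.IsLE k ∧ IsIso ((homologyFunctor A k).map g)

section Lifts

variable {x y : DerivedCategory A} {k : ℤ}

lemma HomologyLifts.of_isGE [x.IsGE k] : HomologyLifts x k :=
  ⟨(TStructure.t.truncLE k).obj x, (TStructure.t.truncLEι k).app x, inferInstance, inferInstance,
    isIso_homologyMap_truncLEι x le_rfl⟩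

lemma HomologyColifts.of_isLE [x.IsLE k] : HomologyColifts x k :=
  ⟨(TStructure.t.truncGE k).obj x, (TStructure.t.truncGEπ k).app x, inferInstance, inferInstance,
    isIso_homologyMap_truncGEπ x le_rfl⟩

lemma HomologyLifts.of_isZero (hx : IsZero ((homologyFunctor A k).obj x)) : HomologyLifts x k := by
  have h0 (j : ℤ) : IsZero ((homologyFunctor A j).obj (0 : DerivedCategory A)) :=
    (homologyFunctor A j).map_isZero (isZero_zero _)
  exact ⟨0, 0, (isGE_iff _ _).mpr fun j _ => h0 j, (isLE_iff _ _).mpr fun j _ => h0 j,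
    (h0 k).isIso hx _⟩

lemma HomologyLifts.map (hx : HomologyLifts x k) (f : x ⟶ y)
    [IsIso ((homologyFunctor A k).map f)] : HomologyLifts y k := by
  obtain ⟨s, g, hs, hs', hg⟩ := hx
  exact ⟨s, g ≫ f, hs, hs', by rw [Functor.map_comp]; infer_instance⟩

lemma HomologyColifts.comap (hy : HomologyColifts y k) (f : x ⟶ y)
    [IsIso ((homologyFunctor A k).map f)] : HomologyColifts x k := by
  obtain ⟨t, g, ht, ht', hg⟩ := hy
  exact ⟨t, f ≫ g, ht, ht', by rw [Functor.map_comp]; infer_instance⟩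

lemma HomologyLifts.shift (hx : HomologyLifts x k) {m l : ℤ} (h : m + l = k) :
    HomologyLifts (x⟦m⟧) l := by
  obtain ⟨s, f, _, _, hf⟩ := hx
  exact ⟨s⟦m⟧, f⟦m⟧', TStructure.t.isGE_shift s k m l h, TStructure.t.isLE_shift s k m l h,
    (isIso_shift_map_shift_iff (homologyFunctor A 0) f m l k h).mpr hf⟩

lemma HomologyColifts.shift (hx : HomologyColifts x k) {m l : ℤ} (h : m + l = k) :
    HomologyColifts (x⟦m⟧) l := by
  obtain ⟨t, g, _, _, hg⟩ := hx
  exact ⟨t⟦m⟧, g⟦m⟧', TStructure.t.isGE_shift t k m l h, TStructure.t.isLE_shift t k m l h,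
    (isIso_shift_map_shift_iff (homologyFunctor A 0) g m l k h).mpr hg⟩

lemma HomologyLifts.of_shift {m l : ℤ} (hx : HomologyLifts (x⟦m⟧) l) (h : m + l = k) :
    HomologyLifts x k :=
  (hx.shift (by omega : -m + k = l)).map (shiftShiftNeg x m).hom

lemma HomologyLifts.exists_hom_from_single (hx : HomologyLifts x k) :
    ∃ f : ((singleFunctor A 0).obj ((homologyFunctor A k).obj x))⟦-k⟧ ⟶ x,
      IsIso ((homologyFunctor A k).map f) := by
  obtain ⟨s, g, _, _, hg⟩ := hx
  obtain ⟨M, ⟨e⟩⟩ := exists_iso_singleFunctor_obj_of_isGE_of_isLE s k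
  let eM : (homologyFunctor A k).obj x ≅ M := (asIso ((homologyFunctor A k).map g)).symm ≪≫
    (homologyFunctor A k).mapIso e ≪≫ (singleFunctorCompHomologyFunctorIso A k).app M
  let e' : ((singleFunctor A 0).obj ((homologyFunctor A k).obj x))⟦-k⟧ ≅ s :=
    ((singleFunctors A).shiftIso (-k) k 0 (by omega)).app _ ≪≫
      (singleFunctor A k).mapIso eM ≪≫ e.symm
  exact ⟨e'.hom ≫ g, by rw [Functor.map_comp]; infer_instance⟩

end Lifts

section Splitting

variable {x : DerivedCategory A}

lemma exists_retract_of_homologyLifts {k : ℤ} (hl : HomologyLifts x k)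
    (hc : HomologyColifts x k) :
    ∃ (x' : DerivedCategory A) (h : Retract x' x), IsZero ((homologyFunctor A k).obj x') ∧
      ∀ j, j ≠ k → IsIso ((homologyFunctor A j).map h.i) := by
  obtain ⟨s, f, _, _, _⟩ := hl
  obtain ⟨t, g, _, _, _⟩ := hc
  have : IsIso ((homologyFunctor A k).map (f ≫ g)) := by
    rw [Functor.map_comp]
    infer_instance
  have : IsIso (f ≫ g) := isIso_of_isIso_homologyMap (f ≫ g) k
  have : Mono f := mono_of_mono f g
  obtain ⟨x', e, he⟩ := exists_iso_biprod_of_mono f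
  refine ⟨x', ⟨biprod.inr ≫ e.inv, e.hom ≫ biprod.snd, by simp⟩, ?_, fun j hj => ?_⟩
  · have : IsIso ((homologyFunctor A k).map (biprod.inl : s ⟶ s ⊞ x')) := by
      rw [← he, Functor.map_comp]
      infer_instance
    exact isZero_obj_of_isIso_map_inl _ (X := s)
  · have hs : IsZero ((homologyFunctor A j).obj s) := by
      rcases lt_or_gt_of_ne hj with hj | hj
      · exact isZero_of_isGE s k j hj
      · exact isZero_of_isLE s k j hj
    have := isIso_map_inr_of_isZero_obj (homologyFunctor A j) (Y := x') hs
    rw [Functor.map_comp]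
    infer_instance

lemma exists_retract_of_homologyLifts₂ {p q : ℤ} (hpq : p ≠ q) (hlp : HomologyLifts x p)
    (hcp : HomologyColifts x p) (hlq : HomologyLifts x q) (hcq : HomologyColifts x q) :
    ∃ (x' : DerivedCategory A) (h : Retract x' x), IsZero ((homologyFunctor A p).obj x') ∧
      IsZero ((homologyFunctor A q).obj x') ∧
      ∀ j, j ≠ p → j ≠ q → IsIso ((homologyFunctor A j).map h.i) := by
  obtain ⟨y, h, hyp, hy⟩ := exists_retract_of_homologyLifts hlp hcp
  have hi : IsIso ((homologyFunctor A q).map h.i) := hy q hpq.symm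
  have hr : IsIso ((homologyFunctor A q).map h.r) := isIso_map_retract_r _ h
  obtain ⟨x', h', hq, hx'⟩ := exists_retract_of_homologyLifts (hlq.map h.r) (hcq.comap h.i)
  refine ⟨x', h'.trans h, IsZero.of_mono (h'.map (homologyFunctor A p)).i hyp, hq,
    fun j hjp hjq => ?_⟩
  have := hy j hjp
  have := hx' j hjq
  rw [Retract.trans_i, Functor.map_comp]
  infer_instance

lemma exists_hom_shift_of_retract {x' : DerivedCategory A} (h : Retract x' x) {d p q : ℤ}
    (hpq : d + p = q) (v : x ⟶ x⟦d⟧) [IsIso ((homologyFunctor A p).map v)]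
    [IsIso ((homologyFunctor A p).map h.i)] [IsIso ((homologyFunctor A q).map h.i)] :
    ∃ v' : x' ⟶ x'⟦d⟧, IsIso ((homologyFunctor A p).map v') := by
  have hr : IsIso ((homologyFunctor A q).map h.r) := isIso_map_retract_r _ h
  have hrd : IsIso ((homologyFunctor A p).map (h.r⟦d⟧')) :=
    (isIso_shift_map_shift_iff (homologyFunctor A 0) h.r d p q hpq).mpr hr
  refine ⟨h.i ≫ v ≫ h.r⟦d⟧', ?_⟩
  rw [Functor.map_comp, Functor.map_comp]
  infer_instance

lemma homologyLifts_of_isIso_homologyMap_shift {a b d : ℤ} (hb : d + a = b) [x.IsGE a]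
    (v : x ⟶ x⟦d⟧) [IsIso ((homologyFunctor A a).map v)] : HomologyLifts x b :=
  (HomologyLifts.of_isGE.map v).of_shift hb

lemma homologyColifts_of_isIso_homologyMap_shift {a b d : ℤ} (hb : d + a = b) [x.IsLE b]
    (v : x ⟶ x⟦d⟧) [IsIso ((homologyFunctor A a).map v)] : HomologyColifts x a :=
  (HomologyColifts.of_isLE.shift hb).comap v

lemma exists_retract_isGE_isLE {a b d : ℤ} (hd : d ≠ 0) (hb : d + a = b) [x.IsGE a] [x.IsLE b]
    (v : x ⟶ x⟦d⟧) [IsIso ((homologyFunctor A a).map v)] :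
    ∃ (x' : DerivedCategory A) (h : Retract x' x), x'.IsGE (a + 1) ∧ x'.IsLE (b - 1) ∧
      ∀ j, j ≠ a → j ≠ b → IsIso ((homologyFunctor A j).map h.i) := by
  obtain ⟨x', h, hxa, hxb, hi⟩ := exists_retract_of_homologyLifts₂ (by omega) .of_isGE
    (homologyColifts_of_isIso_homologyMap_shift hb v)
    (homologyLifts_of_isIso_homologyMap_shift hb v) .of_isLE
  have hret (k : ℤ) (hk : IsZero ((homologyFunctor A k).obj x)) :
      IsZero ((homologyFunctor A k).obj x') := IsZero.of_mono (h.map (homologyFunctor A k)).i hk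
  refine ⟨x', h, (isGE_iff _ _).mpr fun k hk => ?_, (isLE_iff _ _).mpr fun k hk => ?_, hi⟩
  · rcases (Int.lt_add_one_iff.mp hk).lt_or_eq with hk | rfl
    · exact hret k (isZero_of_isGE x a k hk)
    · exact hxa
  · rcases (Int.sub_one_lt_iff.mp hk).lt_or_eq with hk | rfl
    · exact hret k (isZero_of_isLE x b k hk)
    · exact hxb

end Splitting

lemma homologyLifts_of_exists_isIso {c : ℤ} (N : ℕ) {a b : ℤ} (x : DerivedCategory A) [x.IsGE a]
    [x.IsLE b] (hab : a + b = c) (hN : b < a + N)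
    (hv : ∀ p d : ℤ, a ≤ p → 0 < d → 2 * p + d = c →
      ∃ v : x ⟶ x⟦d⟧, IsIso ((homologyFunctor A p).map v)) (j : ℤ) : HomologyLifts x j := by
  induction N generalizing a b x with
  | zero =>
    refine .of_isZero ?_
    rcases le_or_gt a j with hj | hj
    · exact isZero_of_isLE x b j (by omega)
    · exact isZero_of_isGE x a j hj
  | succ N ih =>
    rcases le_or_gt j a with hja | hja
    · have : x.IsGE j := TStructure.t.isGE_of_ge x j a hja
      exact .of_isGE
    rcases lt_or_ge b j with hjb | hjb
    · exact .of_isZero (isZero_of_isLE x b j hjb)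
    obtain ⟨v, _⟩ := hv a (b - a) le_rfl (by omega) (by omega)
    rcases hjb.eq_or_lt with rfl | hjb
    · exact homologyLifts_of_isIso_homologyMap_shift (sub_add_cancel j a) v
    obtain ⟨x', h, _, _, hi⟩ :=
      exists_retract_isGE_isLE (d := b - a) (by omega) (sub_add_cancel b a) v
    have hj : HomologyLifts x' j := by
      refine ih (a := a + 1) (b := b - 1) x' (by omega) (by omega) fun p d hp hd hpd => ?_
      obtain ⟨w, _⟩ := hv p d (by omega) hd hpd
      have := hi p (by omega) (by omega)
      have := hi (d + p) (by omega) (by omega)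
      exact exists_hom_shift_of_retract h rfl w
    have := hi j hja.ne' hjb.ne
    exact hj.map h.i

lemma isIso_biproduct_desc_of_isIso_homologyMap {x : DerivedCategory A} (s : Finset ℤ)
    (hx : ∀ i ∉ s, IsZero ((homologyFunctor A i).obj x)) (S : s → DerivedCategory A)
    (hS : ∀ i : s, ∀ j : ℤ, j ≠ i → IsZero ((homologyFunctor A j).obj (S i))) (f : ∀ i, S i ⟶ x)
    (hf : ∀ i : s, IsIso ((homologyFunctor A i).map (f i))) : IsIso (biproduct.desc f) := by
  rw [isIso_iff]
  intro j
  by_cases hj : j ∈ s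
  · have hι : IsIso ((homologyFunctor A j).map (biproduct.ι S ⟨j, hj⟩)) :=
      isIso_map_biproduct_ι _ _ fun i hi => hS i j fun h => hi (Subtype.ext h.symm)
    have hcomp : IsIso ((homologyFunctor A j).map (biproduct.ι S ⟨j, hj⟩) ≫
        (homologyFunctor A j).map (biproduct.desc f)) := by
      rw [← Functor.map_comp, biproduct.ι_desc]
      exact hf ⟨j, hj⟩
    exact IsIso.of_isIso_comp_left ((homologyFunctor A j).map (biproduct.ι S ⟨j, hj⟩)) _
  · exact (isZero_obj_biproduct _ _ fun i => hS i j fun h => hj (h ▸ i.2)).isIso (hx j hj) _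

lemma nonempty_iso_biproduct_of_homologyLifts {x : DerivedCategory A} (s : Finset ℤ)
    (hs : ∀ i ∉ s, IsZero ((homologyFunctor A i).obj x)) (hx : ∀ i ∈ s, HomologyLifts x i) :
    Nonempty (x ≅ ⨁ fun i : s =>
      ((singleFunctor A 0).obj ((homologyFunctor A (i : ℤ)).obj x))⟦(-(i : ℤ))⟧) := by
  choose f hf using fun i : s => (hx i i.2).exists_hom_from_single
  have := isIso_biproduct_desc_of_isIso_homologyMap s hs _ (fun i j hj => ?_) f hf
  · exact ⟨(asIso (biproduct.desc f)).symm⟩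
  · refine IsZero.of_iso ?_ (((homologyFunctor A 0).shiftIso (-(i : ℤ)) j (j - i) (by ring)).app _)
    rcases lt_or_gt_of_ne hj with hj | hj
    · exact isZero_of_isGE ((singleFunctor A 0).obj _) 0 _ (by omega)
    · exact isZero_of_isLE ((singleFunctor A 0).obj _) 0 _ (by omega)

theorem deligne_decomposition_criterion_general {x : DerivedCategory A} (c : ℤ) (s : Finset ℤ)
    (hs : ∀ i ∉ s, IsZero ((homologyFunctor A i).obj x))
    (hv : ∀ p d : ℤ, 0 < d → 2 * p + d = c →
      ∃ v : x ⟶ x⟦d⟧, IsIso ((homologyFunctor A p).map v)) :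
    Nonempty (x ≅ ⨁ fun i : s =>
      ((singleFunctor A 0).obj ((homologyFunctor A (i : ℤ)).obj x))⟦(-(i : ℤ))⟧) := by
  obtain ⟨l, hl⟩ := s.bddBelow
  obtain ⟨m, hm⟩ := s.bddAbove
  have hGE : x.IsGE (min l (c - m)) :=
    (isGE_iff _ _).mpr fun i hi => hs i fun his => by have := hl his; omega
  have hLE : x.IsLE (c - min l (c - m)) :=
    (isLE_iff _ _).mpr fun i hi => hs i fun his => by have := hm his; omega
  exact nonempty_iso_biproduct_of_homologyLifts s hs fun i _ =>
    homologyLifts_of_exists_isIso (c - 2 * min l (c - m) + 1).toNat x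
      (add_sub_cancel (min l (c - m)) c) (by omega) (fun p d _ => hv p d) i

theorem deligne_decomposition_criterion
    {x : DerivedCategory A} (u : x ⟶ x⟦(2 : ℤ)⟧) (n : ℤ) (a b : ℤ)
    (hbdd : ∀ i : ℤ, i ∉ Finset.Icc a b → IsZero ((homologyFunctor A i).obj x))
    (hiso : ∀ i : ℕ, IsIso (homologyPow u i (n - i) ≫
      eqToHom (congrArg (fun t => (homologyFunctor A t).obj x)
        (show n - (i : ℤ) + 2 * (i : ℕ) = n + (i : ℤ) by ring)))) :
    Nonempty (x ≅ ⨁ fun i : (Finset.Icc a b : Finset ℤ) =>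
      ((singleFunctor A 0).obj ((homologyFunctor A (i : ℤ)).obj x))⟦(-(i : ℤ))⟧) := by
  refine deligne_decomposition_criterion_general (2 * n) (Finset.Icc a b) hbdd fun p d hd hpd => ?_
  obtain ⟨i, rfl⟩ : ∃ i : ℕ, d = i • 2 := ⟨(n - p).toNat, by rw [nsmul_eq_mul]; omega⟩
  obtain rfl : p = n - i := by rw [nsmul_eq_mul] at hpd; omega
  have : IsIso (homologyPow u i (n - i)) := (isIso_comp_right_iff _ _).mp (hiso i)
  exact ⟨shiftedPow u i, isIso_homologyMap_shiftedPow u i (n - i)⟩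
end

section
/- Let A be an abelian category and let x be an object of the bounded derived category D^b(A). Suppose that for every integer i there exists a morphism f_i : H^i(x)⟦-i⟧ → x in D^b(A) (where H^i(x) is regarded as a complex concentrated in degree 0) such that the map induced by f_i on i-th cohomology, H^i(f_i) : H^i(x) → H^i(x), is the identity. Then the morphism ⊕_i f_i : ⊕_i H^i(x)⟦-i⟧ → x is an isomorphism in D^b(A); in particular x ≅ ⊕_i H^i(x)⟦-i⟧. -/
/-!
The key step in the proof of Proposition 3.1 of the paper (direction (2) ⇒ (1)):
if for every `i` there is a morphism `f i : H^i(x)⟦-i⟧ ⟶ x` inducing the identity on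
`i`-th cohomology, then the sum of the `f i` is an isomorphism.
-/

open CategoryTheory CategoryTheory.Limits DerivedCategory

universe w v u

variable (A : Type u) [Category.{v} A] [Abelian A] [HasDerivedCategory.{w} A]

/-- The canonical isomorphism `H^0((singleFunctor A 0).obj M) ≅ M`. -/
noncomputable def singleH0Iso (M : A) :
    (homologyFunctor A 0).obj ((singleFunctor A 0).obj M) ≅ M :=
  (homologyFunctor A 0).mapIso
      (((SingleFunctors.evaluation _ _ 0).mapIso (singleFunctorsPostcompQIso A)).app M) ≪≫
    (homologyFunctorFactors A 0).app ((CochainComplex.singleFunctor A 0).obj M) ≪≫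
    (HomologicalComplex.homologyFunctorSingleIso A (ComplexShape.up ℤ) 0).app M

/-- The canonical isomorphism `H^i(M⟦-i⟧) ≅ M`, where `M` is regarded as a complex
concentrated in degree `0` and then shifted by `-i`. -/
noncomputable def singleShiftHomologyIso (M : A) (i : ℤ) :
    (homologyFunctor A i).obj (((singleFunctor A 0).obj M)⟦-i⟧) ≅ M :=
  ((homologyFunctor A 0).shiftIso (-i) i 0 (by ring)).app ((singleFunctor A 0).obj M) ≪≫
    ((homologyFunctor A 0).isoShiftZero ℤ).app ((singleFunctor A 0).obj M) ≪≫
    singleH0Iso A M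

section Biproducts

variable {C : Type*} [Category* C] [HasZeroMorphisms C] {J : Type*} {X : J → C} [HasBiproduct X]

lemma isZero_biproduct (hX : ∀ j, IsZero (X j)) : IsZero (⨁ X) :=
  (IsZero.iff_id_eq_zero _).2 (biproduct.hom_ext _ _ fun j => (hX j).eq_of_tgt _ _)

lemma isIso_biproduct_ι_of_isZero (k : J) (hX : ∀ j ≠ k, IsZero (X j)) :
    IsIso (biproduct.ι X k) := by
  refine ⟨biproduct.π X k, biproduct.ι_π_self X k, biproduct.hom_ext _ _ fun j => ?_⟩
  by_cases hj : j = k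
  · subst hj
    simp
  · exact (hX j hj).eq_of_tgt _ _

lemma isIso_biproduct_desc_of_isZero {Y : C} (g : ∀ j, X j ⟶ Y) (k : J)
    (hX : ∀ j ≠ k, IsZero (X j)) [IsIso (g k)] : IsIso (biproduct.desc g) := by
  have := isIso_biproduct_ι_of_isZero k hX
  exact IsIso.of_isIso_fac_left (biproduct.ι_desc g k)

end Biproducts

section Homology

variable {A}

lemma isZero_homology_of_ne (X : DerivedCategory A) {i n : ℤ} [X.IsGE i] [X.IsLE i]
    (hn : n ≠ i) : IsZero ((homologyFunctor A n).obj X) :=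
  hn.lt_or_gt.elim (X.isZero_of_isGE i n ·) (X.isZero_of_isLE i n ·)

instance isGE_single_shift (M : A) (i : ℤ) : (((singleFunctor A 0).obj M)⟦-i⟧).IsGE i :=
  TStructure.t.isGE_shift _ 0 (-i) i

instance isLE_single_shift (M : A) (i : ℤ) : (((singleFunctor A 0).obj M)⟦-i⟧).IsLE i :=
  TStructure.t.isLE_shift _ 0 (-i) i

theorem decomposition_of_sections_general {x : DerivedCategory A} (s : Finset ℤ)
    (hx : ∀ n ∉ s, IsZero ((homologyFunctor A n).obj x)) (y : s → DerivedCategory A)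
    [∀ i : s, (y i).IsGE i] [∀ i : s, (y i).IsLE i] (f : ∀ i, y i ⟶ x)
    (hf : ∀ i : s, IsIso ((homologyFunctor A i).map (f i))) :
    IsIso (biproduct.desc f) := by
  -- Only the `n`-th summand has cohomology in degree `n`, so `H^n`
  -- of the sum morphism reduces to `H^n(f n)`.
  rw [DerivedCategory.isIso_iff]
  intro n
  rw [← biproduct.mapBiproduct_hom_desc]
  refine IsIso.comp_isIso' inferInstance ?_
  by_cases hn : n ∈ s
  · have := hf ⟨n, hn⟩
    exact isIso_biproduct_desc_of_isZero _ ⟨n, hn⟩ fun i hi =>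
      isZero_homology_of_ne (y i) fun h => hi (Subtype.ext h.symm)
  · have hy : IsZero (⨁ (homologyFunctor A n).obj ∘ y) :=
      isZero_biproduct fun i => isZero_homology_of_ne (y i) fun h => hn (h ▸ i.2)
    exact hy.isIso (hx n hn) _

end Homology

theorem decomposition_of_sections
    {x : DerivedCategory A} (a b : ℤ)
    (hbdd : ∀ i : ℤ, i ∉ Finset.Icc a b → IsZero ((homologyFunctor A i).obj x))
    (f : ∀ i : ℤ, ((singleFunctor A 0).obj ((homologyFunctor A i).obj x))⟦(-i)⟧ ⟶ x)
    (hf : ∀ i : ℤ, (homologyFunctor A i).map (f i) =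
      (singleShiftHomologyIso A ((homologyFunctor A i).obj x) i).hom) :
    IsIso (biproduct.desc (fun i : (Finset.Icc a b : Finset ℤ) => f (i : ℤ))) :=
  decomposition_of_sections_general (Finset.Icc a b) hbdd _ _ fun i => hf i ▸ inferInstance
end

section
/- Let R be a ring, let (A_j)_{j ∈ ℤ} be a family of R-modules which vanish for all but finitely many j, let u_j : A_j → A_{j+2} be R-linear maps, and let n be an integer. For i ≥ 0 and any j, write u^i : A_j → A_{j+2i} for the i-fold composite of the maps u. Assume that u^i : A_{n-i} → A_{n+i} is an isomorphism for every i ≥ 0. For i ≥ 0 define the primitive part P_{n-i} = ker(u^{i+1} : A_{n-i} → A_{n+i+2}). Then for every i ≥ 0 there are Lefschetz decompositions: A_{n-i} is the internal direct sum of the submodules u^k(P_{n-i-2k}) over k ≥ 0, and A_{n+i} is the internal direct sum of the submodules u^{k+i}(P_{n-i-2k}) over k ≥ 0. -/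
/-!
The Lefschetz (primitive) decomposition used in the proof of Theorem 3.2 of the paper,
for a family of modules `A j` with maps `u j : A j → A (j+2)` such that
`u^i : A (n-i) → A (n+i)` is an isomorphism for all `i ≥ 0`.
-/

variable {R : Type*} [Ring R]

/-- Transport of a module along an equality of indices. -/
def castHom (A : ℤ → Type*) [∀ j, AddCommGroup (A j)] [∀ j, Module R (A j)]
    {j j' : ℤ} (h : j = j') : A j →ₗ[R] A j' := by
  subst h; exact LinearMap.id

/-- The `i`-fold composite `u^i : A j → A (j + 2*i)` of the maps `u`. -/
def upow {A : ℤ → Type*} [∀ j, AddCommGroup (A j)] [∀ j, Module R (A j)]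
    (u : ∀ j, A j →ₗ[R] A (j + 2)) : (i : ℕ) → (j : ℤ) → (A j →ₗ[R] A (j + 2 * i))
  | 0, j => castHom A (by push_cast; ring)
  | (i + 1), j => (castHom A (by push_cast; ring)).comp ((upow u i (j + 2)).comp (u j))

/-- The primitive part `P (n - j) = ker (u^(j+1) : A (n-j) → A (n+j+2))`. -/
def prim {A : ℤ → Type*} [∀ j, AddCommGroup (A j)] [∀ j, Module R (A j)]
    (u : ∀ j, A j →ₗ[R] A (j + 2)) (n : ℤ) (j : ℕ) : Submodule R (A (n - j)) :=
  LinearMap.ker ((castHom A (show n - (j : ℤ) + 2 * ((j + 1 : ℕ) : ℤ) = n + j + 2 by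
    push_cast; ring)).comp (upow u (j + 1) (n - j)))

/-!
Since `u^(i+2) : A (n-i-2) → A (n+i+2)` factors as `u^(i+1) ∘ u` through `A (n-i)`, its bijectivity
makes `u : A (n-i-2) → A (n-i)` injective with image complementary to `P (n-i) = ker u^(i+1)`.
A decomposition of `A (n-i-2)` is thus carried by `u` to one of a complement of `P (n-i)`, so
induction starting from a degree where `A` vanishes decomposes `A (n-i)`; the isomorphism `u^i`
transports the result to `A (n+i)`.
-/

section InternalDirectSum

theorem iSupIndep_of_disjoint_zero_iSup_succ {α : Type*} [CompleteLattice α] [IsModularLattice α]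
    {t : ℕ → α} (hzero : Disjoint (t 0) (⨆ k, t (k + 1))) (hsucc : iSupIndep fun k ↦ t (k + 1)) :
    iSupIndep t := by
  rintro (_ | k)
  · refine hzero.mono_right (iSup₂_le ?_)
    rintro (_ | j) hj
    · exact absurd rfl hj
    · exact le_iSup (fun k ↦ t (k + 1)) j
  · have hothers : ⨆ (j) (_ : j ≠ k + 1), t j ≤ (⨆ (j) (_ : j ≠ k), t (j + 1)) ⊔ t 0 := by
      refine iSup₂_le ?_
      rintro (_ | j) hj
      · exact le_sup_right
      · exact le_sup_of_le_left (le_iSup₂_of_le j (fun h ↦ hj (congrArg (· + 1) h)) le_rfl)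
    have hspan : t (k + 1) ⊔ ⨆ (j) (_ : j ≠ k), t (j + 1) ≤ ⨆ j, t (j + 1) :=
      sup_le (le_iSup (fun j ↦ t (j + 1)) k) (iSup₂_le fun j _ ↦ le_iSup (fun j ↦ t (j + 1)) j)
    exact ((hsucc k).disjoint_sup_right_of_disjoint_sup_left
      (hzero.symm.mono_left hspan)).mono_right hothers

variable {M N P ι : Type*} [AddCommGroup M] [AddCommGroup N] [AddCommGroup P]
  [Module R M] [Module R N] [Module R P]

theorem isCompl_ker_range_of_bijective_comp {f : M →ₗ[R] N} {g : N →ₗ[R] P}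
    (h : Function.Bijective (g ∘ₗ f)) : IsCompl (LinearMap.ker g) (LinearMap.range f) := by
  constructor
  · rw [Submodule.disjoint_def]
    rintro _ hker ⟨x, rfl⟩
    have hx : x = 0 := h.1 (by simpa using hker)
    rw [hx, map_zero]
  · rw [codisjoint_iff, eq_top_iff]
    intro y _
    obtain ⟨x, hx⟩ := h.2 (g y)
    have hker : y - f x ∈ LinearMap.ker g := by
      rw [LinearMap.mem_ker, map_sub, sub_eq_zero]
      exact hx.symm
    exact Submodule.mem_sup.2 ⟨y - f x, hker, f x, ⟨x, rfl⟩, sub_add_cancel y (f x)⟩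

theorem isInternal_of_subsingleton [DecidableEq ι] [Subsingleton M] (p : ι → Submodule R M) :
    DirectSum.IsInternal p :=
  DirectSum.isInternal_submodule_of_iSupIndep_of_iSup_eq_top
    (fun _ ↦ by rw [Subsingleton.elim (p _) ⊥]; exact disjoint_bot_left) (Subsingleton.elim _ _)

theorem isInternal_map_of_bijective [DecidableEq ι] {f : M →ₗ[R] N} (hf : Function.Bijective f)
    {p : ι → Submodule R M} (hp : DirectSum.IsInternal p) :
    DirectSum.IsInternal fun k ↦ (p k).map f :=
  DirectSum.isInternal_submodule_of_iSupIndep_of_iSup_eq_top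
    (f.iSupIndep_map hf.1 hp.submodule_iSupIndep)
    (by rw [← Submodule.map_iSup, hp.submodule_iSup_eq_top, Submodule.map_top,
      LinearMap.range_eq_top.2 hf.2])

theorem isInternal_of_isCompl_range {f : M →ₗ[R] N} (hf : Function.Injective f)
    {p : ℕ → Submodule R M} (hp : DirectSum.IsInternal p) {q : ℕ → Submodule R N}
    (hzero : IsCompl (q 0) (LinearMap.range f)) (hsucc : ∀ k, q (k + 1) = (p k).map f) :
    DirectSum.IsInternal q := by
  have hrange : ⨆ k, q (k + 1) = LinearMap.range f := by
    simp only [hsucc]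
    rw [← Submodule.map_iSup, hp.submodule_iSup_eq_top, Submodule.map_top]
  refine DirectSum.isInternal_submodule_of_iSupIndep_of_iSup_eq_top
    (iSupIndep_of_disjoint_zero_iSup_succ (hrange ▸ hzero.disjoint) ?_) ?_
  · simpa only [hsucc] using f.iSupIndep_map hf hp.submodule_iSupIndep
  · rw [← sup_iSup_nat_succ, hrange, hzero.sup_eq_top]

end InternalDirectSum

theorem exists_subsingleton_of_finite (A : ℤ → Type*) [∀ j, Zero (A j)]
    (hfin : {j : ℤ | ∃ a : A j, a ≠ 0}.Finite) (n : ℤ) (i : ℕ) :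
    ∃ m : ℕ, Subsingleton (A (n - (i + 2 * m : ℕ))) := by
  have hinj : Function.Injective fun m : ℕ ↦ n - ((i + 2 * m : ℕ) : ℤ) := fun m m' h ↦ by
    dsimp only at h; lia
  obtain ⟨m, hm⟩ := (hfin.preimage hinj.injOn).exists_notMem
  exact ⟨m, subsingleton_of_forall_eq 0 (by simpa using hm)⟩

section Lefschetz

variable {A : ℤ → Type*} [∀ j, AddCommGroup (A j)] [∀ j, Module R (A j)]

/-- The iterate `u^m : A a → A b` for any `b` equal to `a + 2 * m`; the equality is a separate
argument so that iterates compose without casts between the modules. -/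
def upowTo (u : ∀ j, A j →ₗ[R] A (j + 2)) (m : ℕ) {a b : ℤ} (h : a + 2 * (m : ℤ) = b := by lia) :
    A a →ₗ[R] A b :=
  castHom A h ∘ₗ upow u m a

/-- The hard Lefschetz property with centre `n`: every `u^i : A (n-i) → A (n+i)` is bijective. -/
def HardLefschetz (u : ∀ j, A j →ₗ[R] A (j + 2)) (n : ℤ) : Prop :=
  ∀ i : ℕ, Function.Bijective (upowTo u i : A (n - i) →ₗ[R] A (n + i))

/-- The Lefschetz component `u^k (P (n-j))`, as a submodule of `A c` for any `c` equal to
`n - j + 2 * k`. -/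
def lefschetzComponent (u : ∀ j, A j →ₗ[R] A (j + 2)) (n : ℤ) (k j : ℕ) {c : ℤ}
    (h : n - (j : ℤ) + 2 * (k : ℤ) = c := by lia) : Submodule R (A c) :=
  (prim u n j).map (upowTo u k h)

variable (u : ∀ j, A j →ₗ[R] A (j + 2)) {n : ℤ}

theorem upowTo_zero {a : ℤ} : (upowTo u 0 : A a →ₗ[R] A a) = LinearMap.id := by
  have hcast {b : ℤ} (h : a = b) (h' : b = a) :
      castHom (R := R) A h' ∘ₗ castHom A h = LinearMap.id := by
    subst h; rfl
  exact hcast _ _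

theorem upowTo_succ (m : ℕ) {a b : ℤ} (h : a + 2 * ((m + 1 : ℕ) : ℤ) = b) :
    upowTo u (m + 1) h = (upowTo u m : A (a + 2) →ₗ[R] A b) ∘ₗ u a := by
  subst h; rfl

theorem upowTo_comp_upowTo {m m' s : ℕ} (hs : m + m' = s) {a b c : ℤ}
    (h : a + 2 * (m : ℤ) = b) (h' : b + 2 * (m' : ℤ) = c) :
    upowTo u m' h' ∘ₗ upowTo u m h = upowTo u s := by
  induction m generalizing a s with
  | zero =>
    obtain rfl : a = b := by simpa using h
    obtain rfl : m' = s := by simpa using hs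
    rw [upowTo_zero, LinearMap.comp_id]
  | succ m ih =>
    obtain rfl : m + m' + 1 = s := by lia
    rw [upowTo_succ, upowTo_succ, ← LinearMap.comp_assoc, ih rfl]

theorem lefschetzComponent_zero (j : ℕ) :
    (lefschetzComponent u n 0 j : Submodule R (A (n - j))) =
      LinearMap.ker (upowTo u (j + 1) : A (n - j) →ₗ[R] A (n + j + 2)) := by
  rw [lefschetzComponent, upowTo_zero, Submodule.map_id]
  rfl

theorem map_upowTo_lefschetzComponent {k k' j j' m : ℕ} (hk : k + m = k') (hj : j = j') {c d : ℤ}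
    (h : n - (j : ℤ) + 2 * (k : ℤ) = c) (h' : c + 2 * (m : ℤ) = d) :
    (lefschetzComponent u n k j h).map (upowTo u m h') = lefschetzComponent u n k' j' := by
  subst hj
  rw [lefschetzComponent, ← Submodule.map_comp, upowTo_comp_upowTo u hk, lefschetzComponent]

variable {u}

theorem HardLefschetz.bijective_upowTo (hu : HardLefschetz u n) {m : ℕ} {a b : ℤ}
    (h : a + 2 * (m : ℤ) = b) (ha : n - m = a) : Function.Bijective (upowTo u m h) := by
  subst ha
  obtain rfl : n + m = b := by lia
  exact hu m

theorem HardLefschetz.bijective_upowTo_comp (hu : HardLefschetz u n) (i : ℕ) :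
    Function.Bijective ((upowTo u (i + 1) : A (n - i) →ₗ[R] A (n + i + 2)) ∘ₗ
      (upowTo u 1 : A (n - (i + 2 : ℕ)) →ₗ[R] A (n - i))) := by
  rw [upowTo_comp_upowTo u (show 1 + (i + 1) = i + 2 by lia)]
  exact hu.bijective_upowTo _ rfl

theorem HardLefschetz.isInternal_lefschetzComponent (hu : HardLefschetz u n) {i m : ℕ}
    (hm : Subsingleton (A (n - (i + 2 * m : ℕ)))) :
    DirectSum.IsInternal fun k ↦ (lefschetzComponent u n k (i + 2 * k) :
      Submodule R (A (n - i))) := by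
  induction m generalizing i with
  | zero =>
    have : Subsingleton (A (n - i)) := hm
    exact isInternal_of_subsingleton _
  | succ m ih =>
    have hcomp := hu.bijective_upowTo_comp i
    have hstep := ih (i := i + 2) (by rwa [show i + 2 + 2 * m = i + 2 * (m + 1) by ring])
    have hinj : Function.Injective (upowTo u 1 : A (n - (i + 2 : ℕ)) →ₗ[R] A (n - i)) :=
      .of_comp (f := upowTo u (i + 1)) hcomp.1
    refine isInternal_of_isCompl_range hinj hstep ?_ fun k ↦ ?_
    · change IsCompl (lefschetzComponent u n 0 i : Submodule R (A (n - i))) _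
      rw [lefschetzComponent_zero]
      exact isCompl_ker_range_of_bijective_comp hcomp
    · exact (map_upowTo_lefschetzComponent u rfl (by ring) _ _).symm

theorem lefschetz_decomposition_general (hu : HardLefschetz u n) {i m : ℕ}
    (hm : Subsingleton (A (n - (i + 2 * m : ℕ)))) :
    DirectSum.IsInternal (fun k ↦ (lefschetzComponent u n k (i + 2 * k) :
      Submodule R (A (n - i)))) ∧
    DirectSum.IsInternal (fun k ↦ (lefschetzComponent u n (k + i) (i + 2 * k) :
      Submodule R (A (n + i)))) := by
  have hlower := hu.isInternal_lefschetzComponent hm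
  refine ⟨hlower, ?_⟩
  have hupper := isInternal_map_of_bijective (hu i) hlower
  simpa only [map_upowTo_lefschetzComponent u rfl rfl] using hupper

end Lefschetz

theorem lefschetz_decomposition
    {A : ℤ → Type*} [∀ j, AddCommGroup (A j)] [∀ j, Module R (A j)]
    (hfin : {j : ℤ | ∃ a : A j, a ≠ 0}.Finite)
    (u : ∀ j, A j →ₗ[R] A (j + 2)) (n : ℤ)
    (hiso : ∀ i : ℕ, Function.Bijective ((castHom A
      (show n - (i : ℤ) + 2 * (i : ℕ) = n + i by push_cast; ring)).comp (upow u i (n - i))))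
    (i : ℕ) :
    DirectSum.IsInternal (fun k : ℕ =>
      Submodule.map ((castHom A (show n - ((i + 2 * k : ℕ) : ℤ) + 2 * (k : ℕ) = n - i by
          push_cast; ring)).comp (upow u k (n - ((i + 2 * k : ℕ) : ℤ))))
        (prim u n (i + 2 * k))) ∧
    DirectSum.IsInternal (fun k : ℕ =>
      Submodule.map ((castHom A (show n - ((i + 2 * k : ℕ) : ℤ) + 2 * ((k + i : ℕ) : ℤ) = n + i by
          push_cast; ring)).comp (upow u (k + i) (n - ((i + 2 * k : ℕ) : ℤ))))
        (prim u n (i + 2 * k))) := by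
  obtain ⟨m, hm⟩ := exists_subsingleton_of_finite A hfin n i
  exact lefschetz_decomposition_general hiso hm
end
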